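/- Fix a node i, a class c, a learning rate η > 0, and current weights W[t] = (W^{(0)}[t], …, W^{(L)}[t]). Let ε ∈ ℝ^{|B|×C} have rows ε_m = softmax(Z(W[t])_m) - onehot(Y_m) for m ∈ B, and perform the gradient step W^{(l)}[t+1] = W^{(l)}[t] - η ((P_sym^l X)_B)^T ε for every 0 ≤ l ≤ L, where (P_sym^l X)_B is the submatrix of rows of P_sym^l X indexed by B. Define χ̃^{(l)} ∈ ℝ^{|B|} by (χ̃^{(l)})_m = √(D_{mm}) Σ_{j,k} (P_rw^l)_{ij} (P_rw^l)_{mk} (D_{jj} D_{kk})^{-1/2} ⟨X_j, X_k⟩. Then |ℓ(Z(W[t+1])_i, c) - ℓ(Z(W[t])_i, c)| ≤ √(D_{ii}) · √2 · η · ‖ε‖_F · Σ_{l=0}^{L} ‖χ̃^{(l)}‖₂, where ‖·‖_F is the Frobenius norm. -/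

import Mathlib

open Finset

/-- The softmax function on `ℝ^C`. -/
noncomputable def softmax {C : ℕ} (z : Fin C → ℝ) (c : Fin C) : ℝ :=
  Real.exp (z c) / ∑ b, Real.exp (z b)

/-- Cross-entropy loss of logits `z` with respect to class `c`. -/
noncomputable def xent {C : ℕ} (z : Fin C → ℝ) (c : Fin C) : ℝ :=
  - Real.log (softmax z c)

/-!
The cross-entropy is `√2`-Lipschitz in the logits: with `v = w - z`, log-sum-exp grows by at most
`max v`, so the loss grows by at most `v k - v c` for some `k`, which is at most `√2 ‖v‖`.

Write `Φ l = Psym ^ l * X`, let `Ψ l` be its rows in the batch, and let `G` be the gradient of the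
training loss in the batch logits. A gradient step moves row `i` of the logits by
`-η` times row `i` of `(∑ l, Φ l (Ψ l)ᵀ) G`. As `Psym` is conjugate to `Prw` by the diagonal matrix
of the `√(deg j)`, row `i` of `Φ l (Ψ l)ᵀ` is `√(deg i) χ l`. Cauchy–Schwarz and the triangle
inequality for `∑ l, χ l` then bound the move.
-/

section EuclideanNorm

variable {ι κ β γ : Type*} [Fintype ι] [Fintype β] [Fintype γ]

theorem sub_le_sqrt_two_mul_sqrt_sum_sq (v : ι → ℝ) (j k : ι) :
    v j - v k ≤ √2 * √(∑ q, v q ^ 2) := by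
  classical
  rw [← Real.sqrt_mul zero_le_two]
  apply Real.le_sqrt_of_sq_le
  obtain rfl | hjk := eq_or_ne j k
  · rw [sub_self, zero_pow two_ne_zero]
    positivity
  · have pair_le : v j ^ 2 + v k ^ 2 ≤ ∑ q, v q ^ 2 := by
      rw [← sum_pair (f := fun q => v q ^ 2) hjk]
      exact sum_le_univ_sum_of_nonneg fun q => sq_nonneg (v q)
    linarith [sq_nonneg (v j + v k)]

theorem sqrt_sum_sq_const_mul (a : ℝ) (v : ι → ℝ) :
    √(∑ q, (a * v q) ^ 2) = |a| * √(∑ q, v q ^ 2) := by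
  simp only [mul_pow, ← mul_sum]
  rw [Real.sqrt_mul (sq_nonneg a), Real.sqrt_sq_eq_abs]

theorem sqrt_sum_sq_sum_le (s : Finset κ) (v : κ → ι → ℝ) :
    √(∑ m, (∑ l ∈ s, v l m) ^ 2) ≤ ∑ l ∈ s, √(∑ m, v l m ^ 2) := by
  simpa [EuclideanSpace.norm_eq] using norm_sum_le s fun l => WithLp.toLp 2 (v l)

theorem sqrt_sum_sq_vecMul_le (v : β → ℝ) (G : Matrix β γ ℝ) :
    √(∑ q, Matrix.vecMul v G q ^ 2) ≤ √(∑ m, v m ^ 2) * √(∑ m, ∑ q, G m q ^ 2) := by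
  rw [← Real.sqrt_mul (by positivity), sum_comm, mul_sum]
  exact Real.sqrt_le_sqrt (sum_le_sum fun q _ => sum_mul_sq_le_sq_mul_sq univ v fun m => G m q)

end EuclideanNorm

section CrossEntropy

/-- The log-sum-exp function, through which the cross-entropy depends on all the logits. -/
noncomputable def logSumExp {ι : Type*} [Fintype ι] (z : ι → ℝ) : ℝ :=
  Real.log (∑ b, Real.exp (z b))

theorem sum_exp_pos {ι : Type*} [Fintype ι] [Nonempty ι] (z : ι → ℝ) :
    0 < ∑ b, Real.exp (z b) :=
  sum_pos (fun b _ => Real.exp_pos (z b)) univ_nonempty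

theorem logSumExp_le_add {ι : Type*} [Fintype ι] [Nonempty ι] {z w : ι → ℝ} {t : ℝ}
    (h : ∀ b, w b ≤ t + z b) : logSumExp w ≤ t + logSumExp z := by
  calc logSumExp w
      ≤ Real.log (∑ b, Real.exp (t + z b)) :=
        Real.log_le_log (sum_exp_pos w) (sum_le_sum fun b _ => Real.exp_le_exp.mpr (h b))
    _ = Real.log (Real.exp t * ∑ b, Real.exp (z b)) := by simp only [Real.exp_add, mul_sum]
    _ = t + logSumExp z := by
        rw [Real.log_mul (Real.exp_ne_zero t) (sum_exp_pos z).ne', Real.log_exp, logSumExp]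

variable {C : ℕ}

theorem xent_eq_logSumExp_sub (z : Fin C → ℝ) (c : Fin C) : xent z c = logSumExp z - z c := by
  have : Nonempty (Fin C) := ⟨c⟩
  rw [xent, softmax, Real.log_div (Real.exp_ne_zero _) (sum_exp_pos z).ne', Real.log_exp, neg_sub,
    logSumExp]

theorem xent_sub_xent_le (z w : Fin C → ℝ) (c : Fin C) :
    xent w c - xent z c ≤ √2 * √(∑ q, (w q - z q) ^ 2) := by
  have : Nonempty (Fin C) := ⟨c⟩
  obtain ⟨k, hk⟩ := Finite.exists_max fun q => w q - z q
  have logSumExp_le : logSumExp w ≤ (w k - z k) + logSumExp z :=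
    logSumExp_le_add fun b => sub_le_iff_le_add.mp (hk b)
  calc xent w c - xent z c
      ≤ (w k - z k) - (w c - z c) := by
        rw [xent_eq_logSumExp_sub, xent_eq_logSumExp_sub]
        linarith
    _ ≤ √2 * √(∑ q, (w q - z q) ^ 2) :=
        sub_le_sqrt_two_mul_sqrt_sum_sq (fun q => w q - z q) k c

theorem abs_xent_sub_xent_le (z w : Fin C → ℝ) (c : Fin C) :
    |xent w c - xent z c| ≤ √2 * √(∑ q, (w q - z q) ^ 2) := by
  refine abs_sub_le_iff.mpr ⟨xent_sub_xent_le z w c, ?_⟩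
  simpa only [sub_sq_comm] using xent_sub_xent_le w z c

end CrossEntropy

section DiagonalConjugation

variable {n d K : Type*} [Fintype n] [DecidableEq n]

theorem semiconjBy_diagonal_sqrt {A Prw Psym : Matrix n n ℝ} {w : n → ℝ} (hw : ∀ i, 0 < w i)
    (hPrw : ∀ i j, Prw i j = A i j / w i)
    (hPsym : ∀ i j, Psym i j = A i j / (√(w i) * √(w j))) :
    SemiconjBy (Matrix.diagonal fun i => √(w i)) Prw Psym := by
  ext i j
  have sqrt_ne_zero : ∀ i, √(w i) ≠ 0 := fun i => (Real.sqrt_pos.mpr (hw i)).ne'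
  rw [Matrix.diagonal_mul, Matrix.mul_diagonal, hPrw, hPsym, ← div_div,
    div_mul_cancel₀ _ (sqrt_ne_zero j), mul_div_left_comm, Real.sqrt_div_self', mul_one_div]

variable [Field K] {r : n → K} {P Q : Matrix n n K}

theorem pow_apply_of_semiconjBy_diagonal (hr : ∀ i, r i ≠ 0)
    (hPQ : SemiconjBy (Matrix.diagonal r) P Q) (l : ℕ) (i j : n) :
    (Q ^ l) i j = r i * (P ^ l) i j * (r j)⁻¹ := by
  have entry := congr_fun₂ (hPQ.pow_right l).eq i j
  rw [Matrix.diagonal_mul, Matrix.mul_diagonal] at entry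
  exact (eq_mul_inv_iff_mul_eq₀ (hr j)).mpr entry.symm

theorem gram_pow_mul_of_semiconjBy_diagonal [Fintype d] (hr : ∀ i, r i ≠ 0)
    (hPQ : SemiconjBy (Matrix.diagonal r) P Q) (X : Matrix n d K) (l : ℕ) (i m : n) :
    ∑ p, (Q ^ l * X) i p * (Q ^ l * X) m p =
      r i * (r m * ∑ j, ∑ k, (P ^ l) i j * (P ^ l) m k * (r j * r k)⁻¹ * ∑ p, X j p * X k p) := by
  simp only [Matrix.mul_apply, sum_mul_sum]
  rw [sum_comm]
  simp only [mul_sum, pow_apply_of_semiconjBy_diagonal hr hPQ]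
  refine sum_congr rfl fun j _ => ?_
  rw [sum_comm]
  refine sum_congr rfl fun k _ => sum_congr rfl fun p _ => ?_
  rw [mul_inv]
  ring

end DiagonalConjugation

section GradientStep

open Matrix

variable {κ n d β γ R : Type*} [Fintype d] [Fintype β] {s : Finset κ}

theorem sum_mul_gradientStep_sub [CommRing R] {Φ : κ → Matrix n d R} {Ψ : κ → Matrix β d R}
    {G : Matrix β γ R} {η : R} {W W' : κ → Matrix d γ R}
    (hW' : ∀ l ∈ s, W' l = W l - η • ((Ψ l)ᵀ * G)) :
    ∑ l ∈ s, Φ l * W' l - ∑ l ∈ s, Φ l * W l = -η • ((∑ l ∈ s, Φ l * (Ψ l)ᵀ) * G) := by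
  rw [← sum_sub_distrib, Matrix.sum_mul, smul_sum]
  refine sum_congr rfl fun l hl => ?_
  rw [hW' l hl, Matrix.mul_sub, sub_sub_cancel_left, Matrix.mul_smul, Matrix.mul_assoc, neg_smul]

theorem sum_mul_gradientStep_sub_apply [CommRing R] {Φ : κ → Matrix n d R} {Ψ : κ → Matrix β d R}
    {G : Matrix β γ R} {η : R} {W W' : κ → Matrix d γ R}
    (hW' : ∀ l ∈ s, W' l = W l - η • ((Ψ l)ᵀ * G))
    {i : n} {a : R} {χ : κ → β → R} (hχ : ∀ l ∈ s, ∀ m, (Φ l * (Ψ l)ᵀ) i m = a * χ l m) (q : γ) :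
    (∑ l ∈ s, Φ l * W' l) i q - (∑ l ∈ s, Φ l * W l) i q =
      -(η * a) * vecMul (fun m => ∑ l ∈ s, χ l m) G q := by
  have kernel_row (m : β) : (∑ l ∈ s, Φ l * (Ψ l)ᵀ) i m = a * ∑ l ∈ s, χ l m := by
    rw [Matrix.sum_apply, mul_sum]
    exact sum_congr rfl fun l hl => hχ l hl m
  rw [← Matrix.sub_apply, sum_mul_gradientStep_sub hW', Matrix.smul_apply, Matrix.mul_apply]
  simp only [kernel_row, vecMul, dotProduct, smul_eq_mul, mul_assoc, ← mul_sum, neg_mul]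

theorem sqrt_sum_sq_gradientStep_sub_le [Fintype γ] {Φ : κ → Matrix n d ℝ} {Ψ : κ → Matrix β d ℝ}
    {G : Matrix β γ ℝ} {η : ℝ} {W W' : κ → Matrix d γ ℝ}
    (hW' : ∀ l ∈ s, W' l = W l - η • ((Ψ l)ᵀ * G))
    {i : n} {a : ℝ} {χ : κ → β → ℝ} (hχ : ∀ l ∈ s, ∀ m, (Φ l * (Ψ l)ᵀ) i m = a * χ l m) :
    √(∑ q, ((∑ l ∈ s, Φ l * W' l) i q - (∑ l ∈ s, Φ l * W l) i q) ^ 2) ≤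
      |η * a| * ((∑ l ∈ s, √(∑ m, χ l m ^ 2)) * √(∑ m, ∑ q, G m q ^ 2)) := by
  simp only [sum_mul_gradientStep_sub_apply hW' hχ]
  rw [sqrt_sum_sq_const_mul, abs_neg]
  gcongr
  calc √(∑ q, vecMul (fun m => ∑ l ∈ s, χ l m) G q ^ 2)
      ≤ √(∑ m, (∑ l ∈ s, χ l m) ^ 2) * √(∑ m, ∑ q, G m q ^ 2) := sqrt_sum_sq_vecMul_le _ G
    _ ≤ (∑ l ∈ s, √(∑ m, χ l m ^ 2)) * √(∑ m, ∑ q, G m q ^ 2) := by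
        gcongr
        exact sqrt_sum_sq_sum_le s χ

end GradientStep

theorem sym_training_step_bound_general {n d β : Type*} [Fintype n] [DecidableEq n] [Fintype d]
    [Fintype β] {C : ℕ} (A : Matrix n n ℝ) (w : n → ℝ) (hw : ∀ i, 0 < w i)
    (Prw : Matrix n n ℝ) (hPrw : ∀ i j, Prw i j = A i j / w i)
    (Psym : Matrix n n ℝ) (hPsym : ∀ i j, Psym i j = A i j / (√(w i) * √(w j)))
    (X : Matrix n d ℝ) (idx : β → n) (i : n) (c : Fin C) (η : ℝ) (s : Finset ℕ)
    (W W' : ℕ → Matrix d (Fin C) ℝ) (Z : (ℕ → Matrix d (Fin C) ℝ) → Matrix n (Fin C) ℝ)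
    (hZ : ∀ V j q, Z V j q = ∑ l ∈ s, ∑ p, (Psym ^ l * X) j p * V l p q)
    (G : Matrix β (Fin C) ℝ)
    (hW' : ∀ l ∈ s, ∀ p q, W' l p q = W l p q - η * ∑ m, (Psym ^ l * X) (idx m) p * G m q)
    (χ : ℕ → β → ℝ)
    (hχ : ∀ l m, χ l m = √(w (idx m)) * ∑ j, ∑ k, (Prw ^ l) i j * (Prw ^ l) (idx m) k *
      (√(w j) * √(w k))⁻¹ * ∑ p, X j p * X k p) :
    |xent (Z W' i) c - xent (Z W i) c| ≤
      √(w i) * √2 * |η| * √(∑ m, ∑ q, G m q ^ 2) * ∑ l ∈ s, √(∑ m, χ l m ^ 2) := by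
  have gram_row (l : ℕ) (m : β) :
      (Psym ^ l * X * ((Psym ^ l * X).submatrix idx id).transpose) i m = √(w i) * χ l m := by
    rw [hχ]
    exact gram_pow_mul_of_semiconjBy_diagonal (fun j => (Real.sqrt_pos.mpr (hw j)).ne')
      (semiconjBy_diagonal_sqrt hw hPrw hPsym) X l i (idx m)
  have logits_eq (V : ℕ → Matrix d (Fin C) ℝ) : Z V = ∑ l ∈ s, Psym ^ l * X * V l := by
    ext j q
    rw [hZ, Matrix.sum_apply]
    rfl
  calc |xent (Z W' i) c - xent (Z W i) c|
      ≤ √2 * √(∑ q, (Z W' i q - Z W i q) ^ 2) := abs_xent_sub_xent_le _ _ c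
    _ ≤ √2 * (|η * √(w i)| * ((∑ l ∈ s, √(∑ m, χ l m ^ 2)) * √(∑ m, ∑ q, G m q ^ 2))) := by
        rw [logits_eq, logits_eq]
        gcongr
        exact sqrt_sum_sq_gradientStep_sub_le (fun l hl => Matrix.ext (hW' l hl))
          fun l _ m => gram_row l m
    _ = _ := by
        rw [abs_mul, abs_of_nonneg (Real.sqrt_nonneg (w i))]
        ring

/-- Theorem 5, SYM training step: after one gradient-descent step on the
batch loss of the linearized SYM model, the change in cross-entropy loss at node `i`
is bounded by `√(D_ii) · √2 · η · ‖ε‖_F · Σ_l ‖χ̃^{(l)}‖₂`. -/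
theorem sym_training_step_bound {N d C b : ℕ} (hC : 2 ≤ C)
    (A : Matrix (Fin N) (Fin N) ℝ)
    (hA01 : ∀ i j, A i j = 0 ∨ A i j = 1)
    (hAsymm : A.IsSymm)
    (deg : Fin N → ℝ) (hdeg : ∀ i, deg i = ∑ j, A i j)
    (hdegpos : ∀ i, 0 < deg i)
    (Prw : Matrix (Fin N) (Fin N) ℝ) (hPrw : ∀ i j, Prw i j = A i j / deg i)
    (Psym : Matrix (Fin N) (Fin N) ℝ)
    (hPsym : ∀ i j, Psym i j = A i j / (Real.sqrt (deg i) * Real.sqrt (deg j)))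
    (X : Matrix (Fin N) (Fin d) ℝ)
    (idx : Fin b → Fin N) (hidx : Function.Injective idx)
    (Y : Fin b → Fin C)
    (i : Fin N) (c : Fin C) (η : ℝ) (hη : 0 < η) (L : ℕ)
    (Wt : ℕ → Fin d → Fin C → ℝ)
    -- the linearized SYM model
    (Zf : (ℕ → Fin d → Fin C → ℝ) → Fin N → Fin C → ℝ)
    (hZf : ∀ W' n c', Zf W' n c' =
      ∑ l ∈ range (L + 1), ∑ p, (Psym ^ l * X) n p * W' l p c')
    -- the residual matrix at step t
    (ε : Fin b → Fin C → ℝ)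
    (hε : ∀ m q, ε m q = softmax (Zf Wt (idx m)) q - (if q = Y m then (1 : ℝ) else 0))
    -- the weights after one gradient step
    (Wt1 : ℕ → Fin d → Fin C → ℝ)
    (hWt1 : ∀ l ≤ L, ∀ p q, Wt1 l p q =
      Wt l p q - η * ∑ m, (Psym ^ l * X) (idx m) p * ε m q)
    -- the expected neighborhood-similarity vectors
    (χ : ℕ → Fin b → ℝ)
    (hχ : ∀ l m, χ l m = Real.sqrt (deg (idx m)) *
      ∑ j, ∑ k, (Prw ^ l) i j * (Prw ^ l) (idx m) k *
        (Real.sqrt (deg j) * Real.sqrt (deg k))⁻¹ * ∑ r, X j r * X k r) :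
    |xent (Zf Wt1 i) c - xent (Zf Wt i) c| ≤
      Real.sqrt (deg i) * Real.sqrt 2 * η *
        Real.sqrt (∑ m, ∑ q, (ε m q) ^ 2) *
        ∑ l ∈ range (L + 1), Real.sqrt (∑ m, (χ l m) ^ 2) := by
  simpa only [abs_of_pos hη] using
    sym_training_step_bound_general A deg hdegpos Prw hPrw Psym hPsym X idx i c η (range (L + 1))
      Wt Wt1 Zf hZf ε (fun l hl => hWt1 l (mem_range_succ_iff.mp hl)) χ hχ
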